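/- (Theorem 3: convergence of CDSGD with diminishing step size, strongly convex case.) Let (Ω, ℱ, P) be a probability space with filtration (ℱ_k)_{k∈ℕ}. Let V : ℝ^N → ℝ be differentiable, H'-strongly convex (H' > 0) with minimizer value V*, and with ∇V Lipschitz continuous with constant γ' ≥ H'. Let (α_k)_{k≥1} be a positive nonincreasing sequence and let (X_k), (G_k) be random vectors with X₁ = x₁ ∈ ℝ^N almost surely, X_k ℱ_k-measurable, G_k ℱ_{k+1}-measurable with E[‖G_k‖²] < ∞, and X_{k+1} = X_k − α_k·G_k. Assume constants ζ₁ > 0, Q̂ ≥ 0, Q̂_m ≥ ζ₁² such that almost surely ⟨∇V(X_k), E[G_k | ℱ_k]⟩ ≥ ζ₁·‖∇V(X_k)‖² and E[‖G_k‖² | ℱ_k] ≤ Q̂ + Q̂_m·‖∇V(X_k)‖² for all k, that α₁ ≤ ζ₁/(γ'·Q̂_m), and that there exists β with sup_k (1 − α_k·H'·ζ₁) ≤ β < 1. Then for all k ≥ 2, E[V(X_k) − V*] ≤ β^{k−2}·(V(x₁) − V*) + (γ'·Q̂/2)·Σ_{p=1}^{k−2} β^{k−p−2}·α_p² + (γ'·Q̂/2)·α_{k−1}².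 -/

import Mathlib

open MeasureTheory Filter
open scoped RealInnerProductSpace BigOperators


open scoped Gradient NNReal

/-!
Taking expectations in the quadratic upper bound for a `K`-smooth `V` along one step
`X ↦ X - a • G`, and using the two conditional moment bounds on `G`, gives
`E V(X - a G) ≤ E V(X) - (a ζ - K Qm a² / 2) E ‖∇ V(X)‖² + K Q a² / 2`.
The step size restriction makes the coefficient in parentheses at least `a ζ / 2`. Strong convexity
enters only through the Polyak–Łojasiewicz inequality `2 μ (V - V*) ≤ ‖∇ V‖²`, which turns the
bound into a contraction of `E (V(X) - V*)` by the factor `1 - a μ ζ`, up to the error `K Q a² / 2`;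
the discrete Grönwall inequality then sums the errors.
-/

section Smooth

variable {E F : Type*} [NormedAddCommGroup E] [NormedAddCommGroup F] {K : ℝ≥0}

theorem norm_sub_sub_fderiv_le_of_lipschitzWith [NormedSpace ℝ E] [NormedSpace ℝ F] {f : E → F}
    (hf : Differentiable ℝ f) (hK : LipschitzWith K (fderiv ℝ f)) (x y : E) :
    ‖f y - f x - fderiv ℝ f x (y - x)‖ ≤ K / 2 * ‖y - x‖ ^ 2 := by
  set r : ℝ → F := fun t ↦ f (x + t • (y - x)) - f x - t • fderiv ℝ f x (y - x) with hr
  have hr' (t : ℝ) :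
      HasDerivAt r (fderiv ℝ f (x + t • (y - x)) (y - x) - fderiv ℝ f x (y - x)) t := by
    have hline : HasDerivAt (fun s : ℝ ↦ x + s • (y - x)) (y - x) t := by
      simpa using ((hasDerivAt_id t).smul_const (y - x)).const_add x
    exact ((((hf _).hasFDerivAt.comp_hasDerivAt t hline).sub_const (f x)).sub
      ((hasDerivAt_id t).smul_const (fderiv ℝ f x (y - x)))).congr_deriv (by rw [one_smul])
  have hbound (t : ℝ) : HasDerivAt (fun t ↦ K / 2 * ‖y - x‖ ^ 2 * t ^ 2)
      (K * ‖y - x‖ ^ 2 * t) t := by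
    refine ((hasDerivAt_pow 2 t).const_mul _).congr_deriv ?_
    push_cast
    ring
  have hr'_le (t : ℝ) (ht : t ∈ Set.Ico (0 : ℝ) 1) :
      ‖fderiv ℝ f (x + t • (y - x)) (y - x) - fderiv ℝ f x (y - x)‖ ≤ K * ‖y - x‖ ^ 2 * t := by
    calc ‖fderiv ℝ f (x + t • (y - x)) (y - x) - fderiv ℝ f x (y - x)‖
        ≤ ‖fderiv ℝ f (x + t • (y - x)) - fderiv ℝ f x‖ * ‖y - x‖ :=
          (fderiv ℝ f (x + t • (y - x)) - fderiv ℝ f x).le_opNorm (y - x)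
      _ ≤ K * ‖x + t • (y - x) - x‖ * ‖y - x‖ := by gcongr; exact hK.norm_sub_le _ _
      _ = K * ‖y - x‖ ^ 2 * t := by
          rw [add_sub_cancel_left, norm_smul, Real.norm_of_nonneg ht.1]
          ring
  simpa [hr] using image_norm_le_of_norm_deriv_right_le_deriv_boundary
    (fun t _ ↦ (hr' t).continuousAt.continuousWithinAt) (fun t _ ↦ (hr' t).hasDerivWithinAt)
    (by simp [hr]) hbound hr'_le (Set.right_mem_Icc.2 zero_le_one)

variable [InnerProductSpace ℝ E] [CompleteSpace E] {V : E → ℝ}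

theorem lipschitzWith_fderiv_iff_gradient :
    LipschitzWith K (fderiv ℝ V) ↔ LipschitzWith K (∇ V) := by
  rw [← toDual_comp_gradient, (InnerProductSpace.toDual ℝ E).isometry.lipschitzWith_iff]

theorem le_add_inner_gradient_add_sq_of_lipschitzWith (hV : Differentiable ℝ V)
    (hK : LipschitzWith K (∇ V)) (x y : E) :
    V y ≤ V x + ⟪∇ V x, y - x⟫ + K / 2 * ‖y - x‖ ^ 2 := by
  have h := (le_abs_self _).trans
    (norm_sub_sub_fderiv_le_of_lipschitzWith hV (lipschitzWith_fderiv_iff_gradient.2 hK) x y)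
  rw [inner_gradient_left]
  linarith

end Smooth

section PolyakLojasiewicz

variable {E : Type*} [NormedAddCommGroup E] [InnerProductSpace ℝ E] [CompleteSpace E]

/-- The Polyak–Łojasiewicz inequality with constant `μ`. The optimal value `Vstar` is a parameter,
so that no minimizer of `V` has to exist. -/
def PolyakLojasiewicz (V : E → ℝ) (μ Vstar : ℝ) : Prop :=
  ∀ x, 2 * μ * (V x - Vstar) ≤ ‖∇ V x‖ ^ 2

theorem polyakLojasiewicz_of_strongly_convex {V : E → ℝ} {μ : ℝ} (hμ : 0 ≤ μ)
    (hV : ∀ x y, V y ≥ V x + ⟪∇ V x, y - x⟫ + μ / 2 * ‖y - x‖ ^ 2) (z : E) :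
    PolyakLojasiewicz V μ (V z) := by
  intro x
  have hsq : 0 ≤ ‖∇ V x‖ ^ 2 + 2 * (μ * ⟪∇ V x, z - x⟫) + (μ * ‖z - x‖) ^ 2 := by
    calc 0 ≤ ‖∇ V x + μ • (z - x)‖ ^ 2 := sq_nonneg _
      _ = _ := by
        rw [norm_add_sq_real, inner_smul_right, norm_smul, Real.norm_of_nonneg hμ]
  linear_combination 2 * μ * hV x z + hsq

end PolyakLojasiewicz

section Integrability

variable {Ω E F : Type*} {m0 : MeasurableSpace Ω} {P : Measure Ω} [IsFiniteMeasure P]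
  [NormedAddCommGroup E] [NormedAddCommGroup F] {K : ℝ≥0} {X : Ω → E}

theorem memLp_comp_of_lipschitzWith {p : ENNReal} {f : E → F} (hf : LipschitzWith K f)
    (hX : MemLp X p P) : MemLp (fun ω ↦ f (X ω)) p P := by
  have hcentered : LipschitzWith K fun x ↦ f x - f 0 := by
    simpa using hf.sub (LipschitzWith.const (f 0))
  simpa [Function.comp_def, Pi.add_def] using
    (hcentered.comp_memLp (sub_self _) hX).add (memLp_const (f 0))

theorem integrable_comp_of_lipschitzWith_fderiv [NormedSpace ℝ E] [NormedSpace ℝ F] {f : E → F}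
    (hf : Differentiable ℝ f) (hK : LipschitzWith K (fderiv ℝ f)) (hX : MemLp X 2 P) :
    Integrable (fun ω ↦ f (X ω)) P := by
  have hlin : Integrable (fun ω ↦ fderiv ℝ f 0 (X ω)) P :=
    (fderiv ℝ f 0).integrable_comp (hX.integrable one_le_two)
  have hrem : Integrable (fun ω ↦ f (X ω) - f 0 - fderiv ℝ f 0 (X ω)) P := by
    refine (hX.integrable_norm_pow two_ne_zero |>.const_mul (K / 2 : ℝ)).mono'
      (((hf.continuous.comp_aestronglyMeasurable hX.1).sub aestronglyMeasurable_const).sub hlin.1)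
      (.of_forall fun ω ↦ ?_)
    simpa using norm_sub_sub_fderiv_le_of_lipschitzWith hf hK 0 (X ω)
  simpa [Pi.add_def] using (hrem.add hlin).add (integrable_const (f 0))

end Integrability

section StochasticStep

variable {Ω E : Type*} {m m0 : MeasurableSpace Ω} {P : Measure Ω}
  [NormedAddCommGroup E] [InnerProductSpace ℝ E]

theorem integrable_inner_of_memLp_two {D G : Ω → E} (hD : MemLp D 2 P) (hG : MemLp G 2 P) :
    Integrable (fun ω ↦ ⟪D ω, G ω⟫) P :=
  memLp_one_iff_integrable.1 ((innerSL ℝ).memLp_of_bilin 1 hD hG)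

variable [CompleteSpace E] {V : E → ℝ} {K : ℝ≥0} {D X G : Ω → E} {a β ζ Q Qm μ Vstar : ℝ}

theorem mul_integral_sq_norm_le_integral_inner [IsFiniteMeasure P] (hm : m ≤ m0)
    (hD : StronglyMeasurable[m] D) (hD2 : MemLp D 2 P) (hG2 : MemLp G 2 P)
    (hinner : ∀ᵐ ω ∂P, ζ * ‖D ω‖ ^ 2 ≤ ⟪D ω, P[G | m] ω⟫) :
    ζ * ∫ ω, ‖D ω‖ ^ 2 ∂P ≤ ∫ ω, ⟪D ω, G ω⟫ ∂P := by
  have hpull : P[fun ω ↦ ⟪D ω, G ω⟫ | m] =ᵐ[P] fun ω ↦ ⟪D ω, P[G | m] ω⟫ :=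
    condExp_bilin_of_stronglyMeasurable_left (innerSL ℝ) hD
      (integrable_inner_of_memLp_two hD2 hG2) (hG2.integrable one_le_two)
  rw [← integral_condExp hm (f := fun ω ↦ ⟪D ω, G ω⟫), ← integral_const_mul]
  refine integral_mono_ae ((hD2.integrable_norm_pow two_ne_zero).const_mul ζ) integrable_condExp ?_
  filter_upwards [hpull, hinner] with ω hω hle
  rwa [hω]

theorem integral_le_add_mul_integral_of_condExp_le [IsProbabilityMeasure P] (hm : m ≤ m0)
    {f g : Ω → ℝ} (hg : Integrable g P) (hle : ∀ᵐ ω ∂P, P[f | m] ω ≤ Q + Qm * g ω) :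
    ∫ ω, f ω ∂P ≤ Q + Qm * ∫ ω, g ω ∂P := by
  calc ∫ ω, f ω ∂P = ∫ ω, P[f | m] ω ∂P := (integral_condExp hm).symm
    _ ≤ ∫ ω, (Q + Qm * g ω) ∂P :=
      integral_mono_ae integrable_condExp ((integrable_const Q).add (hg.const_mul Qm)) hle
    _ = Q + Qm * ∫ ω, g ω ∂P := by
      rw [integral_add (integrable_const Q) (hg.const_mul Qm), integral_const_mul]
      simp

section FiniteMeasure

variable [IsFiniteMeasure P]

theorem integrable_comp_of_lipschitzWith_gradient (hV : Differentiable ℝ V)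
    (hK : LipschitzWith K (∇ V)) (hX : MemLp X 2 P) : Integrable (fun ω ↦ V (X ω)) P :=
  integrable_comp_of_lipschitzWith_fderiv hV (lipschitzWith_fderiv_iff_gradient.2 hK) hX

theorem integral_comp_sub_smul_le (hV : Differentiable ℝ V) (hK : LipschitzWith K (∇ V))
    (hX : MemLp X 2 P) (hG : MemLp G 2 P) (a : ℝ) :
    ∫ ω, V (X ω - a • G ω) ∂P ≤ ∫ ω, V (X ω) ∂P - a * ∫ ω, ⟪∇ V (X ω), G ω⟫ ∂P
      + K / 2 * a ^ 2 * ∫ ω, ‖G ω‖ ^ 2 ∂P := by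
  have hVX := integrable_comp_of_lipschitzWith_gradient hV hK hX
  have hVstep : Integrable (fun ω ↦ V (X ω - a • G ω)) P :=
    integrable_comp_of_lipschitzWith_gradient hV hK (hX.sub (hG.const_smul a))
  have hinner : Integrable (fun ω ↦ a * ⟪∇ V (X ω), G ω⟫) P :=
    (integrable_inner_of_memLp_two (memLp_comp_of_lipschitzWith hK hX) hG).const_mul a
  have hsq : Integrable (fun ω ↦ K / 2 * a ^ 2 * ‖G ω‖ ^ 2) P :=
    (hG.integrable_norm_pow two_ne_zero).const_mul _
  have hlin : Integrable (fun ω ↦ V (X ω) - a * ⟪∇ V (X ω), G ω⟫) P := hVX.sub hinner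
  have hpointwise (ω : Ω) : V (X ω - a • G ω) ≤
      V (X ω) - a * ⟪∇ V (X ω), G ω⟫ + K / 2 * a ^ 2 * ‖G ω‖ ^ 2 := by
    refine (le_add_inner_gradient_add_sq_of_lipschitzWith hV hK (X ω) _).trans_eq ?_
    rw [sub_sub_cancel_left, inner_neg_right, inner_smul_right, norm_neg, norm_smul, mul_pow,
      Real.norm_eq_abs, sq_abs]
    ring
  calc ∫ ω, V (X ω - a • G ω) ∂P
      ≤ ∫ ω, (V (X ω) - a * ⟪∇ V (X ω), G ω⟫ + K / 2 * a ^ 2 * ‖G ω‖ ^ 2) ∂P :=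
        integral_mono hVstep (hlin.add hsq) hpointwise
    _ = _ := by
        rw [integral_add hlin hsq, integral_sub hVX hinner, integral_const_mul, integral_const_mul]

end FiniteMeasure

variable [IsProbabilityMeasure P]

theorem integral_comp_sub_smul_le_sub_integral_sq_norm_gradient (hm : m ≤ m0)
    (hV : Differentiable ℝ V) (hK : LipschitzWith K (∇ V)) (hX : StronglyMeasurable[m] X)
    (hX2 : MemLp X 2 P) (hG2 : MemLp G 2 P) (ha : 0 ≤ a) (haζ : a * (K * Qm) ≤ ζ)
    (hinner : ∀ᵐ ω ∂P, ζ * ‖∇ V (X ω)‖ ^ 2 ≤ ⟪∇ V (X ω), P[G | m] ω⟫)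
    (hsq : ∀ᵐ ω ∂P, P[fun ω ↦ ‖G ω‖ ^ 2 | m] ω ≤ Q + Qm * ‖∇ V (X ω)‖ ^ 2) :
    ∫ ω, V (X ω - a • G ω) ∂P ≤
      ∫ ω, V (X ω) ∂P - a * ζ / 2 * ∫ ω, ‖∇ V (X ω)‖ ^ 2 ∂P + K * Q / 2 * a ^ 2 := by
  have hD2 : MemLp (fun ω ↦ ∇ V (X ω)) 2 P := memLp_comp_of_lipschitzWith hK hX2
  have hfirst := mul_integral_sq_norm_le_integral_inner hm
    (hK.continuous.comp_stronglyMeasurable hX) hD2 hG2 hinner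
  have hsecond := integral_le_add_mul_integral_of_condExp_le hm
    (hD2.integrable_norm_pow two_ne_zero) hsq
  set d := ∫ ω, ‖∇ V (X ω)‖ ^ 2 ∂P
  have : 0 ≤ d := integral_nonneg fun ω ↦ sq_nonneg _
  calc ∫ ω, V (X ω - a • G ω) ∂P
      ≤ ∫ ω, V (X ω) ∂P - a * ∫ ω, ⟪∇ V (X ω), G ω⟫ ∂P
          + K / 2 * a ^ 2 * ∫ ω, ‖G ω‖ ^ 2 ∂P := integral_comp_sub_smul_le hV hK hX2 hG2 a
    _ ≤ ∫ ω, V (X ω) ∂P - a * (ζ * d) + K / 2 * a ^ 2 * (Q + Qm * d) := by gcongr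
    _ = ∫ ω, V (X ω) ∂P - a * (ζ * d) + a / 2 * d * (a * (K * Qm)) + K * Q / 2 * a ^ 2 := by ring
    _ ≤ ∫ ω, V (X ω) ∂P - a * (ζ * d) + a / 2 * d * ζ + K * Q / 2 * a ^ 2 := by gcongr
    _ = _ := by ring

theorem integral_gap_sub_smul_le_mul_integral_gap_add (hm : m ≤ m0)
    (hV : Differentiable ℝ V) (hK : LipschitzWith K (∇ V)) (hPL : PolyakLojasiewicz V μ Vstar)
    (hmin : ∀ x, Vstar ≤ V x) (hX : StronglyMeasurable[m] X) (hX2 : MemLp X 2 P)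
    (hG2 : MemLp G 2 P) (ha : 0 ≤ a) (hζ : 0 ≤ ζ) (haζ : a * (K * Qm) ≤ ζ)
    (hβ : 1 - a * μ * ζ ≤ β)
    (hinner : ∀ᵐ ω ∂P, ζ * ‖∇ V (X ω)‖ ^ 2 ≤ ⟪∇ V (X ω), P[G | m] ω⟫)
    (hsq : ∀ᵐ ω ∂P, P[fun ω ↦ ‖G ω‖ ^ 2 | m] ω ≤ Q + Qm * ‖∇ V (X ω)‖ ^ 2) :
    ∫ ω, (V (X ω - a • G ω) - Vstar) ∂P ≤
      β * ∫ ω, (V (X ω) - Vstar) ∂P + K * Q / 2 * a ^ 2 := by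
  have hVX := integrable_comp_of_lipschitzWith_gradient hV hK hX2
  have hVstep : Integrable (fun ω ↦ V (X ω - a • G ω)) P :=
    integrable_comp_of_lipschitzWith_gradient hV hK (hX2.sub (hG2.const_smul a))
  have hgap : 0 ≤ ∫ ω, (V (X ω) - Vstar) ∂P := integral_nonneg fun ω ↦ sub_nonneg.2 (hmin _)
  have hPL_int : 2 * μ * ∫ ω, (V (X ω) - Vstar) ∂P ≤ ∫ ω, ‖∇ V (X ω)‖ ^ 2 ∂P := by
    rw [← integral_const_mul]
    exact integral_mono ((hVX.sub (integrable_const Vstar)).const_mul (2 * μ))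
      ((memLp_comp_of_lipschitzWith hK hX2).integrable_norm_pow two_ne_zero) fun ω ↦ hPL (X ω)
  have hdescent := integral_comp_sub_smul_le_sub_integral_sq_norm_gradient hm hV hK hX hX2 hG2
    ha haζ hinner hsq
  calc ∫ ω, (V (X ω - a • G ω) - Vstar) ∂P
      = ∫ ω, V (X ω - a • G ω) ∂P - Vstar := by simp [integral_sub hVstep (integrable_const _)]
    _ ≤ ∫ ω, V (X ω) ∂P - a * ζ / 2 * ∫ ω, ‖∇ V (X ω)‖ ^ 2 ∂P + K * Q / 2 * a ^ 2 - Vstar := by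
        gcongr
    _ = ∫ ω, (V (X ω) - Vstar) ∂P - a * ζ / 2 * ∫ ω, ‖∇ V (X ω)‖ ^ 2 ∂P
          + K * Q / 2 * a ^ 2 := by
        simp only [integral_sub hVX (integrable_const _), integral_const, probReal_univ, one_smul]
        ring
    _ ≤ ∫ ω, (V (X ω) - Vstar) ∂P - a * ζ / 2 * (2 * μ * ∫ ω, (V (X ω) - Vstar) ∂P)
          + K * Q / 2 * a ^ 2 := by gcongr
    _ = (1 - a * μ * ζ) * ∫ ω, (V (X ω) - Vstar) ∂P + K * Q / 2 * a ^ 2 := by ring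
    _ ≤ β * ∫ ω, (V (X ω) - Vstar) ∂P + K * Q / 2 * a ^ 2 := by gcongr

end StochasticStep

section Iteration

theorem one_sub_mul_nonneg_of_step_le {a γ μ ζ Qm : ℝ} (ha : 0 ≤ a) (hγ : 0 ≤ γ) (hμγ : μ ≤ γ)
    (hζ : 0 < ζ) (hQm : ζ ^ 2 ≤ Qm) (haζ : a * (γ * Qm) ≤ ζ) : 0 ≤ 1 - a * μ * ζ := by
  have h : a * μ * ζ * ζ ≤ 1 * ζ := by
    calc a * μ * ζ * ζ = a * (μ * ζ ^ 2) := by ring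
      _ ≤ a * (γ * Qm) := by gcongr
      _ ≤ 1 * ζ := by rwa [one_mul]
  exact sub_nonneg.2 (le_of_mul_le_mul_right h hζ)

theorem le_pow_mul_add_sum_of_le_mul_add {u b : ℕ → ℝ} {β : ℝ} (hβ : 0 ≤ β)
    (hu : ∀ k, 1 ≤ k → u (k + 1) ≤ β * u k + b k) {k : ℕ} (hk : 1 ≤ k) :
    u k ≤ β ^ (k - 1) * u 1 + ∑ p ∈ Finset.Ico 1 k, β ^ (k - (p + 1)) * b p := by
  simpa [mul_comm] using discrete_gronwall_prod_general hu (fun _ _ ↦ hβ) hk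

-- The paper's bound has one factor `β` fewer than the Grönwall bound in every term but the last.
theorem pow_mul_add_sum_le_of_le_one {b : ℕ → ℝ} {β u : ℝ} (hβ₀ : 0 ≤ β) (hβ₁ : β ≤ 1)
    (hu : 0 ≤ u) (hb : ∀ p, 0 ≤ b p) {k : ℕ} (hk : 2 ≤ k) :
    β ^ (k - 1) * u + ∑ p ∈ Finset.Ico 1 k, β ^ (k - (p + 1)) * b p ≤
      β ^ (k - 2) * u + ∑ p ∈ Finset.Icc 1 (k - 2), β ^ (k - p - 2) * b p + b (k - 1) := by
  obtain ⟨n, rfl⟩ := Nat.exists_eq_add_of_le' hk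
  have hIcc : Finset.Icc 1 (n + 2 - 2) = Finset.Ico 1 (n + 1) := rfl
  have hpow {i j : ℕ} (hij : i ≤ j) : β ^ j ≤ β ^ i := pow_le_pow_of_le_one hβ₀ hβ₁ hij
  have hhead : β ^ (n + 2 - 1) * u ≤ β ^ (n + 2 - 2) * u :=
    mul_le_mul_of_nonneg_right (hpow (by omega)) hu
  have hsum : ∑ p ∈ Finset.Ico 1 (n + 1), β ^ (n + 2 - (p + 1)) * b p ≤
      ∑ p ∈ Finset.Ico 1 (n + 1), β ^ (n + 2 - p - 2) * b p :=
    Finset.sum_le_sum fun p _ ↦ mul_le_mul_of_nonneg_right (hpow (by omega)) (hb p)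
  have hlast : β ^ (n + 2 - (n + 1 + 1)) * b (n + 1) = b (n + 2 - 1) := by simp
  rw [hIcc, Finset.sum_Ico_succ_top (by omega : 1 ≤ n + 1), hlast, ← add_assoc]
  exact add_le_add_left (add_le_add hhead hsum) _

variable {Ω E : Type*} {m0 : MeasurableSpace Ω} {P : Measure Ω}
  [NormedAddCommGroup E] {X G : ℕ → Ω → E} {α : ℕ → ℝ}

theorem memLp_of_sub_smul_recursion [NormedSpace ℝ E] {p : ENNReal} (hX1 : MemLp (X 1) p P)
    (hG : ∀ k, 1 ≤ k → MemLp (G k) p P)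
    (hupdate : ∀ k, 1 ≤ k → X (k + 1) =ᵐ[P] fun ω ↦ X k ω - α k • G k ω) {k : ℕ} (hk : 1 ≤ k) :
    MemLp (X k) p P := by
  induction k, hk using Nat.le_induction with
  | base => exact hX1
  | succ k hk ih =>
    exact (memLp_congr_ae (hupdate k hk)).2 (ih.sub ((hG k hk).const_smul (α k)))

variable [InnerProductSpace ℝ E] [CompleteSpace E] [IsProbabilityMeasure P] {ℱ : Filtration ℕ m0}
  {V : E → ℝ} {K : ℝ≥0} {β ζ Q Qm μ Vstar : ℝ}

theorem integral_gap_stochasticGradientDescent_le (hV : Differentiable ℝ V)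
    (hK : LipschitzWith K (∇ V)) (hPL : PolyakLojasiewicz V μ Vstar) (hmin : ∀ x, Vstar ≤ V x)
    (hα : ∀ k, 1 ≤ k → 0 ≤ α k) (hζ : 0 ≤ ζ) (hαζ : ∀ k, 1 ≤ k → α k * (K * Qm) ≤ ζ)
    (hβ₀ : 0 ≤ β) (hβ : ∀ k, 1 ≤ k → 1 - α k * μ * ζ ≤ β)
    (hX1 : MemLp (X 1) 2 P) (hX : StronglyAdapted ℱ X) (hG : ∀ k, 1 ≤ k → MemLp (G k) 2 P)
    (hupdate : ∀ k, 1 ≤ k → X (k + 1) =ᵐ[P] fun ω ↦ X k ω - α k • G k ω)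
    (hinner : ∀ k, 1 ≤ k → ∀ᵐ ω ∂P,
      ζ * ‖∇ V (X k ω)‖ ^ 2 ≤ ⟪∇ V (X k ω), P[G k | ℱ k] ω⟫)
    (hsq : ∀ k, 1 ≤ k → ∀ᵐ ω ∂P,
      P[fun ω ↦ ‖G k ω‖ ^ 2 | ℱ k] ω ≤ Q + Qm * ‖∇ V (X k ω)‖ ^ 2) {k : ℕ} (hk : 1 ≤ k) :
    ∫ ω, (V (X k ω) - Vstar) ∂P ≤ β ^ (k - 1) * ∫ ω, (V (X 1 ω) - Vstar) ∂P
      + ∑ p ∈ Finset.Ico 1 k, β ^ (k - (p + 1)) * (K * Q / 2 * α p ^ 2) := by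
  refine le_pow_mul_add_sum_of_le_mul_add (u := fun k ↦ ∫ ω, (V (X k ω) - Vstar) ∂P) hβ₀
    (fun k hk ↦ ?_) hk
  have hstep : ∫ ω, (V (X (k + 1) ω) - Vstar) ∂P
      = ∫ ω, (V (X k ω - α k • G k ω) - Vstar) ∂P :=
    integral_congr_ae ((hupdate k hk).fun_comp (V · - Vstar))
  rw [hstep]
  exact integral_gap_sub_smul_le_mul_integral_gap_add (ℱ.le k) hV hK hPL hmin (hX k)
    (memLp_of_sub_smul_recursion hX1 hG hupdate hk) (hG k hk) (hα k hk) hζ (hαζ k hk) (hβ k hk)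
    (hinner k hk) (hsq k hk)

end Iteration

theorem cdsgd_diminishing_step_strongly_convex_general {Ω E : Type*} {m0 : MeasurableSpace Ω}
    [NormedAddCommGroup E] [InnerProductSpace ℝ E] [CompleteSpace E]
    (P : Measure Ω) [IsProbabilityMeasure P] (ℱ : Filtration ℕ m0) (V : E → ℝ) (μ γ Vstar : ℝ)
    (hγ : 0 ≤ γ) (hV : Differentiable ℝ V) (hPL : PolyakLojasiewicz V μ Vstar)
    (hLip : LipschitzWith γ.toNNReal (∇ V)) (hmin : ∀ x, Vstar ≤ V x) (x₁ : E) (X G : ℕ → Ω → E)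
    (α : ℕ → ℝ) (hα : ∀ k, 1 ≤ k → 0 ≤ α k) (ζ Q Qm : ℝ) (hζ : 0 ≤ ζ) (hQ : 0 ≤ Q)
    (hαζ : ∀ k, 1 ≤ k → α k * (γ * Qm) ≤ ζ)
    (β : ℝ) (hβ₀ : 0 ≤ β) (hβ₁ : β ≤ 1) (hβ : ∀ k, 1 ≤ k → 1 - α k * μ * ζ ≤ β)
    (hX1 : ∀ᵐ ω ∂P, X 1 ω = x₁) (hX : StronglyAdapted ℱ X)
    (hG : ∀ k, 1 ≤ k → MemLp (G k) 2 P)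
    (hupdate : ∀ k, 1 ≤ k → X (k + 1) =ᵐ[P] fun ω ↦ X k ω - α k • G k ω)
    (hinner : ∀ k, 1 ≤ k → ∀ᵐ ω ∂P,
      ζ * ‖∇ V (X k ω)‖ ^ 2 ≤ ⟪∇ V (X k ω), P[G k | ℱ k] ω⟫)
    (hsq : ∀ k, 1 ≤ k → ∀ᵐ ω ∂P,
      P[fun ω ↦ ‖G k ω‖ ^ 2 | ℱ k] ω ≤ Q + Qm * ‖∇ V (X k ω)‖ ^ 2) (k : ℕ) (hk : 2 ≤ k) :
    ∫ ω, (V (X k ω) - Vstar) ∂P ≤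
      β ^ (k - 2) * (V x₁ - Vstar)
        + γ * Q / 2 * ∑ p ∈ Finset.Icc 1 (k - 2), β ^ (k - p - 2) * α p ^ 2
        + γ * Q / 2 * α (k - 1) ^ 2 := by
  have hinit : ∫ ω, (V (X 1 ω) - Vstar) ∂P = V x₁ - Vstar := by
    calc ∫ ω, (V (X 1 ω) - Vstar) ∂P = ∫ _, (V x₁ - Vstar) ∂P :=
          integral_congr_ae (EventuallyEq.fun_comp hX1 (V · - Vstar))
      _ = V x₁ - Vstar := by simp
  have hX1_memLp : MemLp (X 1) 2 P := (memLp_congr_ae hX1).2 (memLp_const x₁)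
  have hsharp := integral_gap_stochasticGradientDescent_le hV hLip hPL hmin hα hζ
    (by rwa [Real.coe_toNNReal γ hγ]) hβ₀ hβ hX1_memLp hX hG hupdate hinner hsq (by omega : 1 ≤ k)
  rw [Real.coe_toNNReal γ hγ, hinit] at hsharp
  refine (hsharp.trans (pow_mul_add_sum_le_of_le_one hβ₀ hβ₁ (sub_nonneg.2 (hmin x₁))
    (fun p ↦ by positivity) hk)).trans_eq ?_
  simp only [Finset.mul_sum, mul_left_comm]

/-- Theorem 3 (convergence of CDSGD with diminishing step size, strongly convex case):
`E[V(X_k) − V*] ≤ β^{k−2}·(V(x₁) − V*) + (γ'·Q̂/2)·Σ_{p=1}^{k−2} β^{k−p−2}·α_p²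
  + (γ'·Q̂/2)·α_{k−1}²`. -/
theorem cdsgd_diminishing_step_strongly_convex {N : ℕ} {Ω : Type*} {m0 : MeasurableSpace Ω}
    (P : Measure Ω) [IsProbabilityMeasure P] (ℱ : Filtration ℕ m0)
    (V : EuclideanSpace ℝ (Fin N) → ℝ) (H' γ' : ℝ)
    (hH' : 0 < H') (hH'γ' : H' ≤ γ')
    (hdiff : Differentiable ℝ V)
    (hsc : ∀ x y : EuclideanSpace ℝ (Fin N),
      V y ≥ V x + ⟪gradient V x, y - x⟫ + (H' / 2) * ‖y - x‖ ^ 2)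
    (hLip : LipschitzWith γ'.toNNReal (gradient V))
    (xstar : EuclideanSpace ℝ (Fin N)) (hmin : ∀ x, V xstar ≤ V x)
    (x₁ : EuclideanSpace ℝ (Fin N))
    (X G : ℕ → Ω → EuclideanSpace ℝ (Fin N))
    (α : ℕ → ℝ) (hαpos : ∀ k, 1 ≤ k → 0 < α k)
    (hαmono : ∀ k l, 1 ≤ k → k ≤ l → α l ≤ α k)
    (ζ₁ Q Qm : ℝ) (hζ₁ : 0 < ζ₁) (hQ : 0 ≤ Q) (hQm : ζ₁ ^ 2 ≤ Qm)
    (hα1 : α 1 ≤ ζ₁ / (γ' * Qm))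
    (β : ℝ) (hβlt : β < 1) (hβ : ∀ k, 1 ≤ k → 1 - α k * H' * ζ₁ ≤ β)
    (hX1 : ∀ᵐ ω ∂P, X 1 ω = x₁)
    (hXmeas : ∀ k, StronglyMeasurable[ℱ k] (X k))
    (hGmeas : ∀ k, StronglyMeasurable[ℱ (k + 1)] (G k))
    (hGint : ∀ k, Integrable (fun ω => ‖G k ω‖ ^ 2) P)
    (hupdate : ∀ k, 1 ≤ k → ∀ ω, X (k + 1) ω = X k ω - α k • G k ω)
    (hinner : ∀ k, 1 ≤ k → ∀ᵐ ω ∂P,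
      ζ₁ * ‖gradient V (X k ω)‖ ^ 2 ≤ ⟪gradient V (X k ω), (P[G k|ℱ k]) ω⟫)
    (hsecond : ∀ k, 1 ≤ k → ∀ᵐ ω ∂P,
      (P[(fun ω' => ‖G k ω'‖ ^ 2)|ℱ k]) ω ≤ Q + Qm * ‖gradient V (X k ω)‖ ^ 2) :
    ∀ k : ℕ, 2 ≤ k →
      (∫ ω, (V (X k ω) - V xstar) ∂P) ≤
        β ^ (k - 2) * (V x₁ - V xstar)
          + γ' * Q / 2 * ∑ p ∈ Finset.Icc 1 (k - 2), β ^ (k - p - 2) * (α p) ^ 2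
          + γ' * Q / 2 * (α (k - 1)) ^ 2 := by
  have hγ' : 0 < γ' := hH'.trans_le hH'γ'
  have hQm_pos : 0 < Qm := (pow_pos hζ₁ 2).trans_le hQm
  have hα : ∀ k, 1 ≤ k → α k * (γ' * Qm) ≤ ζ₁ := fun k hk ↦
    (le_div_iff₀ (mul_pos hγ' hQm_pos)).1 ((hαmono 1 k le_rfl hk).trans hα1)
  have hβ₀ : 0 ≤ β := (one_sub_mul_nonneg_of_step_le (hαpos 1 le_rfl).le hγ'.le hH'γ' hζ₁ hQm
    (hα 1 le_rfl)).trans (hβ 1 le_rfl)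
  have hG (k : ℕ) : MemLp (G k) 2 P := (memLp_two_iff_integrable_sq_norm
    ((hGmeas k).mono (ℱ.le (k + 1))).aestronglyMeasurable).2 (hGint k)
  exact cdsgd_diminishing_step_strongly_convex_general P ℱ V H' γ' (V xstar) hγ'.le hdiff
    (polyakLojasiewicz_of_strongly_convex hH'.le hsc xstar) hLip hmin x₁ X G α
    (fun k hk ↦ (hαpos k hk).le) ζ₁ Q Qm hζ₁.le hQ hα β hβ₀ hβlt.le hβ hX1 hXmeas
    (fun k _ ↦ hG k) (fun k hk ↦ .of_forall (hupdate k hk)) hinner hsecond
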